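/- Let X be a complex Banach space, let T be a bounded linear operator on X that is ag-Drazin invertible in the Banach algebra L(X) of bounded linear operators on X, and let F be a bounded linear operator on X of finite rank (i.e., the range of F is finite-dimensional). If TF = FT, then T + F is ag-Drazin invertible in L(X). -/

import Mathlib

open Filter Topology

/-- An element of a complex Banach algebra is quasinilpotent if its spectrum is `{0}`. -/
def IsQuasinilpotent {A : Type*} [NormedRing A] [NormedAlgebra ℂ A] (b : A) : Prop :=
  spectrum ℂ b = {0}

/-- `a` is generalized Drazin invertible. -/
def IsGDrazinInv {A : Type*} [NormedRing A] [NormedAlgebra ℂ A] (a : A) : Prop :=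
  ∃ x : A, a * x = x * a ∧ x * a * x = x ∧ IsQuasinilpotent (a - a ^ 2 * x)

/-- `a ∈ A^acc`: `a - λ1` is generalized Drazin invertible for all nonzero `λ`. -/
def MemAcc {A : Type*} [NormedRing A] [NormedAlgebra ℂ A] (a : A) : Prop :=
  ∀ l : ℂ, l ≠ 0 → IsGDrazinInv (a - l • (1 : A))

/-- `x` is an ag-Drazin inverse of `a`. -/
def IsAgDrazinInverseOf {A : Type*} [NormedRing A] [NormedAlgebra ℂ A] (x a : A) : Prop :=
  a * x = x * a ∧ x * a * x = x ∧ MemAcc (a - a ^ 2 * x)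

/-- `a` is ag-Drazin invertible. -/
def IsAgDrazinInv {A : Type*} [NormedRing A] [NormedAlgebra ℂ A] (a : A) : Prop :=
  ∃ x : A, IsAgDrazinInverseOf x a

/-- The generalized Drazin spectrum. -/
def gDrazinSpectrum {A : Type*} [NormedRing A] [NormedAlgebra ℂ A] (a : A) : Set ℂ :=
  {l : ℂ | ¬ IsGDrazinInv (a - l • (1 : A))}

/-- The ag-Drazin spectrum. -/
def agDrazinSpectrum {A : Type*} [NormedRing A] [NormedAlgebra ℂ A] (a : A) : Set ℂ :=
  {l : ℂ | ¬ IsAgDrazinInv (a - l • (1 : A))}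

/-!
A finite-rank operator `F` is algebraic, so its Fitting idempotent `e` is a polynomial in `F` and
commutes with `T`. On the block of `1 - e` the operator `F` is nilpotent, and on the block of `e`
the sum `T + F` has finite rank. It therefore suffices that ag-Drazin invertibility survives adding
a commuting nilpotent and passing to a diagonal sum of two blocks. Both hold as soon as the
idempotent of the ag-Drazin splitting of `T` can be chosen in the bicommutant of `T`. By Rosenblum's
theorem this is the case when `T` has disjoint spectra on the two blocks of the splitting. To
achieve it, one moves into the invertible block the part of the spectrum of the `acc` block lying in
the spectrum of the invertible one, a compact set avoiding `0`; finitely many of the idempotents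
provided by the generalized Drazin inverses of `T - l` with `l ≠ 0` do this.
-/

section PeirceDiag

variable {A : Type*} [Ring A] {c e u v u' v' : A}

/-- The block-diagonal element `diag(u, v)` with respect to the Peirce decomposition of an
idempotent `e`: it acts as `u` on the block of `e` and as `v` on the block of `1 - e`. It is only
used for `u` and `v` commuting with `e`. -/
def peirceDiag (e u v : A) : A := u * e + v * (1 - e)

@[simp]
lemma peirceDiag_self (e u : A) : peirceDiag e u u = u := by
  simp only [peirceDiag]; noncomm_ring

lemma peirceDiag_add (e u v u' v' : A) :
    peirceDiag e u v + peirceDiag e u' v' = peirceDiag e (u + u') (v + v') := by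
  simp only [peirceDiag]; noncomm_ring

lemma peirceDiag_sub (e u v u' v' : A) :
    peirceDiag e u v - peirceDiag e u' v' = peirceDiag e (u - u') (v - v') := by
  simp only [peirceDiag]; noncomm_ring

lemma peirceDiag_mul_self (he : IsIdempotentElem e) : peirceDiag e u v * e = u * e := by
  rw [peirceDiag, add_mul, mul_assoc, he.eq, mul_assoc, he.one_sub_mul_self, mul_zero, add_zero]

lemma peirceDiag_mul (he : IsIdempotentElem e) (hu' : Commute e u') (hv' : Commute e v') :
    peirceDiag e u v * peirceDiag e u' v' = peirceDiag e (u * u') (v * v') := by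
  have heu : e * (u' * e) = u' * e := by rw [← mul_assoc, hu'.eq, mul_assoc, he.eq]
  have hev : e * (v' * e) = v' * e := by rw [← mul_assoc, hv'.eq, mul_assoc, he.eq]
  simp only [peirceDiag, mul_add, add_mul, mul_sub, sub_mul, mul_one, mul_assoc, heu, hev, hv'.eq]
  abel

lemma commute_peirceDiag (he : Commute c e) (hu : Commute c u) (hv : Commute c v) :
    Commute c (peirceDiag e u v) :=
  (hu.mul_right he).add_right (hv.mul_right ((Commute.one_right c).sub_right he))

lemma isUnit_peirceDiag (he : IsIdempotentElem e) (heu : Commute e u) (hev : Commute e v)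
    (hu : IsUnit u) (hv : IsUnit v) : IsUnit (peirceDiag e u v) := by
  obtain ⟨u, rfl⟩ := hu
  obtain ⟨v, rfl⟩ := hv
  refine isUnit_iff_exists.2 ⟨peirceDiag e ↑u⁻¹ ↑v⁻¹, ?_, ?_⟩
  · rw [peirceDiag_mul he heu.units_inv_right hev.units_inv_right, u.mul_inv, v.mul_inv,
      peirceDiag_self]
  · rw [peirceDiag_mul he heu hev, u.inv_mul, v.inv_mul, peirceDiag_self]

end PeirceDiag

section DrazinSplitting

variable {A : Type*} [Ring A] {P : A → Prop} {a e n u v g e₁ e₂ : A}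

/-- The idempotent `e` splits `a` into an invertible block, on `e`, and a block satisfying `P`, on
`1 - e`. Up to the choice of `P` this is Drazin invertibility of `a` expressed through the
idempotent `e = a * x` instead of the inverse `x`; invertibility of `a * e` in the corner ring
`e A e` is encoded as invertibility of `a * e + (1 - e)` in `A`. -/
structure IsDrazinSplitting (P : A → Prop) (a e : A) : Prop where
  isIdempotentElem : IsIdempotentElem e
  commute : Commute e a
  isUnit : IsUnit (peirceDiag e a 1)
  remainder : P (a * (1 - e))

lemma isUnit_peirceDiag_one_of_mul_eq {c : A} (he : IsIdempotentElem e) (hac : a * c = e)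
    (hca : c * a = e) : IsUnit (peirceDiag e a 1) := by
  have hea : Commute e a := by rw [Commute, SemiconjBy, ← hac, mul_assoc, hca, hac]
  have hec : Commute e c := by rw [Commute, SemiconjBy, ← hca, mul_assoc, hac, hca]
  have hone : peirceDiag e e 1 = 1 := by simp only [peirceDiag, he.eq, one_mul, add_sub_cancel]
  refine isUnit_iff_exists.2 ⟨peirceDiag e c 1, ?_, ?_⟩
  · rw [peirceDiag_mul he hec (Commute.one_right e), hac, one_mul, hone]
  · rw [peirceDiag_mul he hea (Commute.one_right e), hca, one_mul, hone]

namespace IsDrazinSplitting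

lemma exists_mul_eq (h : IsDrazinSplitting P a e) : ∃ x, a * x = e ∧ x * a = e ∧ x * e = x := by
  obtain ⟨w, hw⟩ := h.isUnit
  have hwe : ↑w * e = a * e := by
    rw [hw, peirceDiag_mul_self h.isIdempotentElem]
  have haw : Commute a w :=
    hw ▸ commute_peirceDiag h.commute.symm (Commute.refl a) (Commute.one_right a)
  refine ⟨↑w⁻¹ * e, ?_, ?_, ?_⟩
  · rw [← mul_assoc, haw.units_inv_right.eq, mul_assoc, ← hwe, Units.inv_mul_cancel_left]
  · rw [mul_assoc, h.commute.eq, ← hwe, Units.inv_mul_cancel_left]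
  · rw [mul_assoc, h.isIdempotentElem.eq]

lemma mono {Q : A → Prop} (h : IsDrazinSplitting P a e) (hPQ : ∀ b, P b → Q b) :
    IsDrazinSplitting Q a e :=
  { h with remainder := hPQ _ h.remainder }

lemma peirceDiag_peirceDiag
    (hP : ∀ x y, Commute g x → Commute g y → P x → P y → P (peirceDiag g x y))
    (hg : IsIdempotentElem g) (hgu : Commute g u) (hgv : Commute g v) (hge₁ : Commute g e₁)
    (hge₂ : Commute g e₂) (hu : IsDrazinSplitting P u e₁) (hv : IsDrazinSplitting P v e₂) :
    IsDrazinSplitting P (peirceDiag g u v) (peirceDiag g e₁ e₂) := by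
  have hcompl : 1 - peirceDiag g e₁ e₂ = peirceDiag g (1 - e₁) (1 - e₂) := by
    rw [← peirceDiag_sub, peirceDiag_self]
  have hge₁' := (Commute.one_right g).sub_right hge₁
  have hge₂' := (Commute.one_right g).sub_right hge₂
  refine ⟨?_, ?_, ?_, ?_⟩
  · rw [IsIdempotentElem, peirceDiag_mul hg hge₁ hge₂, hu.isIdempotentElem.eq,
      hv.isIdempotentElem.eq]
  · rw [Commute, SemiconjBy, peirceDiag_mul hg hgu hgv, peirceDiag_mul hg hge₁ hge₂,
      hu.commute.eq, hv.commute.eq]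
  · have hblocks : peirceDiag (peirceDiag g e₁ e₂) (peirceDiag g u v) 1 =
        peirceDiag g (peirceDiag e₁ u 1) (peirceDiag e₂ v 1) := by
      rw [peirceDiag, hcompl, peirceDiag_mul hg hge₁ hge₂, one_mul, peirceDiag_add]
      simp only [peirceDiag, one_mul]
    rw [hblocks]
    exact isUnit_peirceDiag hg (commute_peirceDiag hge₁ hgu (Commute.one_right g))
      (commute_peirceDiag hge₂ hgv (Commute.one_right g)) hu.isUnit hv.isUnit
  · rw [hcompl, peirceDiag_mul hg hge₁' hge₂']
    exact hP _ _ (hgu.mul_right hge₁') (hgv.mul_right hge₂') hu.remainder hv.remainder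

lemma add_isNilpotent (hP : ∀ x m, Commute x m → IsNilpotent m → P x → P (x + m))
    (hn : IsNilpotent n) (hna : Commute n a) (hne : Commute n e)
    (h : IsDrazinSplitting P a e) : IsDrazinSplitting P (a + n) e := by
  have hne' : Commute n (1 - e) := (Commute.one_right n).sub_right hne
  have hae' : Commute a (1 - e) := (Commute.one_right a).sub_right h.commute.symm
  refine ⟨h.isIdempotentElem, h.commute.add_right hne.symm, ?_, ?_⟩
  · have hsum : peirceDiag e (a + n) 1 = peirceDiag e a 1 + n * e := by
      simp only [peirceDiag, add_mul]; abel
    rw [hsum]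
    refine (hne.isNilpotent_mul_right hn).isUnit_add_left_of_commute h.isUnit ?_
    exact (commute_peirceDiag hne hna (Commute.one_right n)).mul_left
      (commute_peirceDiag (Commute.refl e) h.commute (Commute.one_right e))
  · rw [add_mul]
    exact hP _ _ ((hna.symm.mul_right hae').mul_left (hne'.symm.mul_right (Commute.refl _)))
      (hne'.isNilpotent_mul_right hn) h.remainder

end IsDrazinSplitting

lemma exists_isDrazinSplitting_iff :
    (∃ e, IsDrazinSplitting P a e) ↔ ∃ x, a * x = x * a ∧ x * a * x = x ∧ P (a - a ^ 2 * x) := by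
  constructor
  · rintro ⟨e, h⟩
    obtain ⟨x, hax, hxa, hxe⟩ := h.exists_mul_eq
    refine ⟨x, hax.trans hxa.symm, by rw [mul_assoc, hax, hxe], ?_⟩
    rw [sq, mul_assoc, hax, ← mul_one_sub]
    exact h.remainder
  · rintro ⟨x, hcomm, hxax, hP⟩
    have hidem : IsIdempotentElem (a * x) := by
      rw [IsIdempotentElem, mul_assoc, ← mul_assoc x, hxax]
    refine ⟨a * x, hidem, ?_, isUnit_peirceDiag_one_of_mul_eq hidem rfl hcomm.symm, ?_⟩
    · exact (Commute.refl a).mul_left hcomm.symm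
    · rwa [mul_one_sub, ← mul_assoc, ← sq]

end DrazinSplitting

section CornerSpectrum

variable {R A : Type*} [CommRing R] [Ring A] [Algebra R A] {e f s t u v : A}

variable (R) in
/-- The spectrum of `t * e` in the corner ring `e A e` of an idempotent `e` commuting with `t`,
expressed through invertibility in `A` by completing with the identity on the block of `1 - e`. -/
def cornerSpectrum (e t : A) : Set R := {z | ¬ IsUnit (peirceDiag e (t - algebraMap R A z) 1)}

lemma mem_cornerSpectrum {z : R} :
    z ∈ cornerSpectrum R e t ↔ ¬ IsUnit (peirceDiag e (t - algebraMap R A z) 1) :=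
  Iff.rfl

@[simp]
lemma cornerSpectrum_zero (t : A) : cornerSpectrum R 0 t = ∅ := by
  simp [cornerSpectrum, peirceDiag]

@[simp]
lemma cornerSpectrum_one (t : A) : cornerSpectrum R 1 t = spectrum R t := by
  ext z
  rw [spectrum.mem_iff, IsUnit.sub_iff]
  simp [mem_cornerSpectrum, peirceDiag]

lemma cornerSpectrum_congr (h : s * e = t * e) : cornerSpectrum R e s = cornerSpectrum R e t := by
  simp only [cornerSpectrum, peirceDiag, sub_mul, h]

lemma cornerSpectrum_sub_algebraMap (e t : A) (r : R) :
    cornerSpectrum R e (t - algebraMap R A r) = (· + r) ⁻¹' cornerSpectrum R e t := by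
  ext z
  simp only [mem_cornerSpectrum, Set.mem_preimage, map_add, sub_sub, add_comm]

lemma zero_notMem_cornerSpectrum : (0 : R) ∉ cornerSpectrum R e t ↔ IsUnit (peirceDiag e t 1) := by
  simp [mem_cornerSpectrum]

lemma cornerSpectrum_mul_subset (hf : IsIdempotentElem f) (hfe : Commute f e) (hft : Commute f t) :
    cornerSpectrum R (e * f) t ⊆ cornerSpectrum R e t := by
  refine fun z hz hunit => hz ?_
  have hsplit : peirceDiag (e * f) (t - algebraMap R A z) 1 =
      peirceDiag f (peirceDiag e (t - algebraMap R A z) 1) 1 := by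
    simp only [peirceDiag]; noncomm_ring
  rw [hsplit]
  exact isUnit_peirceDiag hf (commute_peirceDiag hfe
    (hft.sub_right (Algebra.commute_algebraMap_right z f)) (Commute.one_right f))
    (Commute.one_right f) hunit isUnit_one

lemma cornerSpectrum_mul_subset_cornerSpectrum_mul (he : IsIdempotentElem e) (hef : Commute e f)
    (het : Commute e t) : cornerSpectrum R (e * f) t ⊆ cornerSpectrum R f (t * e) := by
  have hcongr : t * (e * f) = t * e * (e * f) := by
    rw [← mul_assoc, ← mul_assoc, mul_assoc t e e, he.eq]
  rw [cornerSpectrum_congr hcongr, hef.eq]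
  exact cornerSpectrum_mul_subset he hef (het.mul_right (Commute.refl e))

lemma cornerSpectrum_subset_spectrum (he : IsIdempotentElem e) (het : Commute e t) :
    cornerSpectrum R e t ⊆ spectrum R t := by
  simpa using cornerSpectrum_mul_subset (R := R) he (Commute.one_right e) het

lemma cornerSpectrum_sup_subset (he : IsIdempotentElem e) (hef : Commute e f) (het : Commute e t) :
    cornerSpectrum R (e + f - e * f) t ⊆ cornerSpectrum R e t ∪ cornerSpectrum R f t := by
  intro z hz
  by_contra hnot
  simp only [Set.mem_union, not_or, mem_cornerSpectrum, not_not] at hnot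
  have hez : Commute e (t - algebraMap R A z) :=
    het.sub_right (Algebra.commute_algebraMap_right z e)
  have hsplit : peirceDiag (e + f - e * f) (t - algebraMap R A z) 1 =
      peirceDiag e (peirceDiag e (t - algebraMap R A z) 1)
        (peirceDiag f (t - algebraMap R A z) 1) := by
    simp only [peirceDiag, mul_add, add_mul, mul_sub, sub_mul, mul_one, one_mul, mul_assoc, he.eq,
      hef.eq]
    abel
  refine hz ?_
  rw [hsplit]
  exact isUnit_peirceDiag he (commute_peirceDiag (Commute.refl e) hez (Commute.one_right e))
    (commute_peirceDiag hef hez (Commute.one_right e)) hnot.1 hnot.2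

lemma spectrum_peirceDiag_subset (he : IsIdempotentElem e) (heu : Commute e u) (hev : Commute e v) :
    spectrum R (peirceDiag e u v) ⊆ cornerSpectrum R e u ∪ cornerSpectrum R (1 - e) v := by
  have he' : Commute e (1 - e) := (Commute.one_right e).sub_right (Commute.refl e)
  have hcomm : Commute e (peirceDiag e u v) := commute_peirceDiag (Commute.refl e) heu hev
  have hu : peirceDiag e u v * e = u * e := peirceDiag_mul_self he
  have hv : peirceDiag e u v * (1 - e) = v * (1 - e) := by
    rw [mul_one_sub, hu, peirceDiag, add_sub_cancel_left]
  have h := cornerSpectrum_sup_subset (R := R) he he' hcomm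
  rwa [he.mul_one_sub_self, sub_zero, add_sub_cancel, cornerSpectrum_one, cornerSpectrum_congr hu,
    cornerSpectrum_congr hv] at h

lemma spectrum_peirceDiag_algebraMap_subset {𝕜 : Type*} [Field 𝕜] [Algebra 𝕜 A]
    (he : IsIdempotentElem e) (het : Commute e t) (r : 𝕜) :
    spectrum 𝕜 (peirceDiag e t (algebraMap 𝕜 A r)) ⊆ insert r (cornerSpectrum 𝕜 e t) := by
  have hscalar : spectrum 𝕜 (algebraMap 𝕜 A r) ⊆ {r} := by
    refine fun z hz => by_contra fun hzr => hz ?_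
    rw [spectrum.mem_resolventSet_iff, ← map_sub]
    exact (isUnit_iff_ne_zero.2 (sub_ne_zero.2 hzr)).map (algebraMap 𝕜 A)
  have her : Commute e (algebraMap 𝕜 A r) := Algebra.commute_algebraMap_right r e
  calc spectrum 𝕜 (peirceDiag e t (algebraMap 𝕜 A r))
      ⊆ cornerSpectrum 𝕜 e t ∪ cornerSpectrum 𝕜 (1 - e) (algebraMap 𝕜 A r) :=
        spectrum_peirceDiag_subset he het her
    _ ⊆ cornerSpectrum 𝕜 e t ∪ {r} :=
        Set.union_subset_union_right _ ((cornerSpectrum_subset_spectrum he.one_sub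
          ((Commute.one_left _).sub_left her)).trans hscalar)
    _ = insert r (cornerSpectrum 𝕜 e t) := Set.union_singleton

end CornerSpectrum

lemma resolvent_mul_eq_mul_resolvent {R A : Type*} [CommRing R] [Ring A] [Algebra R A]
    {a b y : A} {z : R} (hy : a * y = y * b) (hza : z ∈ resolventSet R a)
    (hzb : z ∈ resolventSet R b) : resolvent a z * y = y * resolvent b z := by
  have hinter : (algebraMap R A z - a) * y = y * (algebraMap R A z - b) := by
    rw [sub_mul, mul_sub, hy, Algebra.commutes]
  calc resolvent a z * y
      = resolvent a z * (y * (algebraMap R A z - b)) * resolvent b z := by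
        rw [mul_assoc, mul_assoc, resolvent, resolvent, Ring.mul_inverse_cancel _ hzb, mul_one]
    _ = y * resolvent b z := by
        rw [← hinter, ← mul_assoc, resolvent, Ring.inverse_mul_cancel _ hza, one_mul]

section BanachAlgebra

variable {A : Type*} [NormedRing A] [NormedAlgebra ℂ A] [CompleteSpace A]
  {a b c e t y : A}

lemma isClosed_cornerSpectrum (e t : A) : IsClosed (cornerSpectrum ℂ e t) := by
  have hcont : Continuous fun z : ℂ => peirceDiag e (t - algebraMap ℂ A z) 1 := by
    simp only [peirceDiag]
    fun_prop
  exact (Units.isOpen.preimage hcont).isClosed_compl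

lemma isCompact_cornerSpectrum (he : IsIdempotentElem e) (het : Commute e t) :
    IsCompact (cornerSpectrum ℂ e t) :=
  (spectrum.isCompact t).of_isClosed_subset (isClosed_cornerSpectrum e t)
    (cornerSpectrum_subset_spectrum he het)

lemma exists_differentiable_eqOn_resolvent_mul (hab : Disjoint (spectrum ℂ a) (spectrum ℂ b))
    (hy : a * y = y * b) :
    ∃ φ : ℂ → A, Differentiable ℂ φ ∧ Set.EqOn φ (resolvent a · * y) (resolventSet ℂ a) := by
  classical
  let φ : ℂ → A := fun z => if z ∈ resolventSet ℂ a then resolvent a z * y else y * resolvent b z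
  have hφa : Set.EqOn φ (resolvent a · * y) (resolventSet ℂ a) := fun z hz => if_pos hz
  have hφb : Set.EqOn φ (y * resolvent b ·) (resolventSet ℂ b) := by
    intro z hz
    by_cases hza : z ∈ resolventSet ℂ a
    · exact (hφa hza).trans (resolvent_mul_eq_mul_resolvent hy hza hz)
    · exact if_neg hza
  refine ⟨φ, fun z => ?_, hφa⟩
  by_cases hza : z ∈ resolventSet ℂ a
  · have hdiff := (spectrum.hasDerivAt_resolvent_const_left hza).differentiableAt.mul_const y
    exact hdiff.congr_of_eventuallyEq
      (hφa.eventuallyEq_of_mem ((spectrum.isOpen_resolventSet a).mem_nhds hza))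
  · have hzb : z ∈ resolventSet ℂ b := by
      by_contra hzb
      exact hab.le_bot ⟨hza, hzb⟩
    have hdiff := (spectrum.hasDerivAt_resolvent_const_left hzb).differentiableAt.const_mul y
    exact hdiff.congr_of_eventuallyEq
      (hφb.eventuallyEq_of_mem ((spectrum.isOpen_resolventSet b).mem_nhds hzb))

/-- Rosenblum's theorem. The resolvents of `a` and `b` glue to an entire function vanishing at
infinity, so Liouville's theorem applies. -/
lemma eq_zero_of_mul_eq_mul_of_disjoint_spectrum
    (hab : Disjoint (spectrum ℂ a) (spectrum ℂ b)) (hy : a * y = y * b) : y = 0 := by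
  obtain ⟨φ, hφ, hφa⟩ := exists_differentiable_eqOn_resolvent_mul hab hy
  have hres : ∀ᶠ z in Bornology.cobounded ℂ, z ∈ resolventSet ℂ a :=
    (spectrum.eventually_isUnit_resolvent a).mono fun z => spectrum.isUnit_resolvent.2
  have hlim : Tendsto φ (cocompact ℂ) (𝓝 0) := by
    rw [← Metric.cobounded_eq_cocompact, ← zero_mul y]
    exact ((spectrum.resolvent_tendsto_cobounded a).mul_const y).congr'
      (hres.mono fun z hz => (hφa hz).symm)
  obtain ⟨z, hz⟩ := hres.exists
  have hzero : resolvent a z * y = 0 :=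
    (hφa hz).symm.trans (hφ.apply_eq_of_tendsto_cocompact z hlim)
  exact (spectrum.isUnit_resolvent.1 hz).mul_right_eq_zero.1 hzero

lemma mul_mul_one_sub_eq_zero_of_disjoint_cornerSpectrum (he : IsIdempotentElem e)
    (het : Commute e t) (hct : Commute c t)
    (hdisj : Disjoint (cornerSpectrum ℂ e t) (cornerSpectrum ℂ (1 - e) t)) :
    e * c * (1 - e) = 0 := by
  obtain ⟨α, hα⟩ : ∃ α, α ∉ spectrum ℂ t :=
    (Set.ne_univ_iff_exists_notMem _).1 (spectrum.isCompact t).ne_univ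
  obtain ⟨β, hβ⟩ : ∃ β, β ∉ insert α (spectrum ℂ t) :=
    (Set.ne_univ_iff_exists_notMem _).1 ((spectrum.isCompact t).insert α).ne_univ
  have he't : Commute (1 - e) t := (Commute.one_left t).sub_left het
  have hsub' : cornerSpectrum ℂ (1 - e) t ⊆ spectrum ℂ t :=
    cornerSpectrum_subset_spectrum he.one_sub he't
  have hsub : cornerSpectrum ℂ e t ⊆ spectrum ℂ t := cornerSpectrum_subset_spectrum he het
  -- The scalars `α ≠ β` fill the complementary blocks without making the spectra meet.
  have hfill : Disjoint (insert α (cornerSpectrum ℂ e t))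
      (insert β (cornerSpectrum ℂ (1 - e) t)) := by
    rw [Set.mem_insert_iff, not_or] at hβ
    rw [Set.disjoint_insert_left, Set.disjoint_insert_right, Set.mem_insert_iff, not_or]
    exact ⟨⟨Ne.symm hβ.1, fun h => hα (hsub' h)⟩, fun h => hβ.2 (hsub h), hdisj⟩
  refine eq_zero_of_mul_eq_mul_of_disjoint_spectrum
    (hfill.mono (spectrum_peirceDiag_algebraMap_subset he het α)
      (spectrum_peirceDiag_algebraMap_subset he.one_sub he't β)) ?_
  have hleft : peirceDiag e t (algebraMap ℂ A α) * e = t * e := peirceDiag_mul_self he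
  have hright : (1 - e) * peirceDiag (1 - e) t (algebraMap ℂ A β) = (1 - e) * t := by
    rw [(commute_peirceDiag (Commute.refl _) he't (Algebra.commute_algebraMap_right β _)).eq,
      peirceDiag_mul_self he.one_sub, he't.eq]
  calc peirceDiag e t (algebraMap ℂ A α) * (e * c * (1 - e))
      = t * e * c * (1 - e) := by rw [mul_assoc e, ← mul_assoc, hleft, ← mul_assoc]
    _ = e * c * ((1 - e) * t) := by
      rw [← het.eq, mul_assoc e, ← hct.eq, he't.eq]; simp only [mul_assoc]
    _ = e * c * (1 - e) * peirceDiag (1 - e) t (algebraMap ℂ A β) := by rw [← hright, ← mul_assoc]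

lemma commute_of_disjoint_cornerSpectrum (he : IsIdempotentElem e) (het : Commute e t)
    (hct : Commute c t)
    (hdisj : Disjoint (cornerSpectrum ℂ e t) (cornerSpectrum ℂ (1 - e) t)) : Commute c e := by
  have hupper : e * c * (1 - e) = 0 :=
    mul_mul_one_sub_eq_zero_of_disjoint_cornerSpectrum he het hct hdisj
  have hlower : (1 - e) * c * (1 - (1 - e)) = 0 :=
    mul_mul_one_sub_eq_zero_of_disjoint_cornerSpectrum he.one_sub
      ((Commute.one_left t).sub_left het) hct (by rw [sub_sub_cancel]; exact hdisj.symm)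
  rw [sub_sub_cancel, sub_mul, sub_mul, one_mul, sub_eq_zero] at hlower
  rw [mul_one_sub, sub_eq_zero] at hupper
  exact hlower.trans hupper.symm

end BanachAlgebra

section AlgebraicElements

variable {𝕜 A : Type*} [Field 𝕜] [Ring A] [Algebra 𝕜 A] {f : A}

open Polynomial in
lemma exists_eq_X_pow_mul_and_isCoprime {m : 𝕜[X]} (hm : m ≠ 0) :
    ∃ (k : ℕ) (q : 𝕜[X]), m = X ^ k * q ∧ IsCoprime (X ^ (k + 1)) q := by
  obtain ⟨q, hmq, hq⟩ := m.exists_eq_pow_rootMultiplicity_mul_and_not_dvd hm 0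
  rw [C_0, sub_zero] at hmq hq
  exact ⟨_, q, hmq, ((irreducible_X.coprime_iff_not_dvd).2 hq).pow_left⟩

open Polynomial in
/-- The Fitting decomposition of an algebraic element, cut out by a Bézout relation between the
powers of `X` and the remaining factor of an annihilating polynomial. -/
lemma exists_isDrazinSplitting_isNilpotent (hf : IsAlgebraic 𝕜 f) :
    ∃ e, IsDrazinSplitting IsNilpotent f e ∧ ∀ c, Commute c f → Commute c e := by
  obtain ⟨m, hm, hmf⟩ := hf
  obtain ⟨k, q, rfl, r, s, hrs⟩ := exists_eq_X_pow_mul_and_isCoprime hm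
  have hvanish : ∀ p : 𝕜[X], X ^ k * q ∣ p → aeval f p = 0 := fun p hp =>
    aeval_eq_zero_of_dvd_aeval_eq_zero hp hmf
  have hX_mul : ∀ p : 𝕜[X], f * aeval f p = aeval f (X * p) := fun p => by rw [map_mul, aeval_X]
  have hmul_X : ∀ p : 𝕜[X], aeval f p * f = aeval f (p * X) := fun p => by rw [map_mul, aeval_X]
  have hone_sub : 1 - aeval f (r * X ^ (k + 1)) = aeval f (s * q) := by
    rw [← map_one (aeval (R := 𝕜) f), ← map_sub, ← hrs, add_sub_cancel_left]
  have hcomm : ∀ c, Commute c f → Commute c (aeval f (r * X ^ (k + 1))) := fun c =>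
    Algebra.commute_of_mem_adjoin_singleton_of_commute (aeval_mem_adjoin_singleton 𝕜 f)
  have hidem : IsIdempotentElem (aeval f (r * X ^ (k + 1))) := by
    refine (sub_eq_zero.1 ?_).symm
    rw [← mul_one_sub, hone_sub, ← map_mul]
    exact hvanish _ ⟨r * s * X, by ring⟩
  refine ⟨aeval f (r * X ^ (k + 1)), ⟨hidem, (hcomm f (Commute.refl f)).symm, ?_, k + 1, ?_⟩, hcomm⟩
  · refine isUnit_peirceDiag_one_of_mul_eq (c := aeval f (r * X ^ k)) hidem ?_ ?_
    · rw [hX_mul, pow_succ', mul_left_comm]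
    · rw [hmul_X, pow_succ, mul_assoc]
  · rw [hone_sub, hX_mul, ← map_pow]
    exact hvanish _ ⟨X * s * (s * q) ^ k, by ring⟩

open Polynomial in
lemma isAlgebraic_sub_algebraMap (hf : IsAlgebraic 𝕜 f) (r : 𝕜) :
    IsAlgebraic 𝕜 (f - algebraMap 𝕜 A r) := by
  have hshift : aeval (f - algebraMap 𝕜 A r) (X + C r) = f := by
    rw [map_add, aeval_X, aeval_C, sub_add_cancel]
  exact .of_aeval (X + C r) (by simp) (by simp) (hshift.symm ▸ hf)

end AlgebraicElements

section FiniteRank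

variable {𝕜 V W : Type*} [Field 𝕜] [AddCommGroup V] [Module 𝕜 V] [AddCommGroup W] [Module 𝕜 W]

open Polynomial in
lemma aeval_comp_eq_comp_aeval {S : Module.End 𝕜 V} {T : Module.End 𝕜 W} {ψ : V →ₗ[𝕜] W}
    (h : T ∘ₗ ψ = ψ ∘ₗ S) (p : 𝕜[X]) : aeval T p ∘ₗ ψ = ψ ∘ₗ aeval S p := by
  induction p using Polynomial.induction_on with
  | C r => ext; simp
  | add p q hp hq => rw [map_add, map_add, LinearMap.add_comp, LinearMap.comp_add, hp, hq]
  | monomial n r ih =>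
    rw [pow_succ, ← mul_assoc, map_mul, map_mul _ _ X, aeval_X, aeval_X, Module.End.mul_eq_comp,
      Module.End.mul_eq_comp, LinearMap.comp_assoc, h, ← LinearMap.comp_assoc, ih,
      LinearMap.comp_assoc]

open Polynomial in
lemma isAlgebraic_end_of_finiteDimensional_range (T : Module.End 𝕜 V)
    [FiniteDimensional 𝕜 (LinearMap.range T)] : IsAlgebraic 𝕜 T := by
  let S : Module.End 𝕜 (LinearMap.range T) := T.rangeRestrict ∘ₗ (LinearMap.range T).subtype
  have hS : T ∘ₗ (LinearMap.range T).subtype = (LinearMap.range T).subtype ∘ₗ S := rfl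
  obtain ⟨p, hp, hpS⟩ := Algebra.IsAlgebraic.isAlgebraic (R := 𝕜) S
  refine ⟨p * X, mul_ne_zero hp X_ne_zero, ?_⟩
  calc aeval T (p * X)
      = (aeval T p ∘ₗ (LinearMap.range T).subtype) ∘ₗ T.rangeRestrict := by
        rw [map_mul, aeval_X]; rfl
    _ = 0 := by
        rw [aeval_comp_eq_comp_aeval hS, hpS, LinearMap.comp_zero, LinearMap.zero_comp]

lemma isAlgebraic_of_finiteDimensional_range {𝕜 X : Type*} [NormedField 𝕜]
    [NormedAddCommGroup X] [NormedSpace 𝕜 X] (T : X →L[𝕜] X)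
    [FiniteDimensional 𝕜 (LinearMap.range (T : X →ₗ[𝕜] X))] : IsAlgebraic 𝕜 T := by
  let toEnd : (X →L[𝕜] X) →ₐ[𝕜] Module.End 𝕜 X :=
    AlgHom.ofLinearMap (ContinuousLinearMap.coeLM 𝕜) rfl fun _ _ => rfl
  have hinj : Function.Injective toEnd := ContinuousLinearMap.coe_injective
  exact (isAlgebraic_algHom_iff toEnd hinj).1
    (isAlgebraic_end_of_finiteDimensional_range (T : X →ₗ[𝕜] X))

end FiniteRank

lemma spectrum_add_subset_of_isNilpotent {R A : Type*} [CommRing R] [Ring A] [Algebra R A]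
    {u n : A} (hun : Commute u n) (hn : IsNilpotent n) : spectrum R (u + n) ⊆ spectrum R u := by
  refine fun z hz hunit => hz ?_
  rw [spectrum.mem_resolventSet_iff, ← sub_sub, sub_eq_add_neg]
  exact hn.neg.isUnit_add_left_of_commute hunit
    ((Algebra.commute_algebraMap_right z _).sub_right hun.symm.neg_left)

lemma isGDrazinInv_iff {A : Type*} [NormedRing A] [NormedAlgebra ℂ A] {a : A} :
    IsGDrazinInv a ↔ ∃ e, IsDrazinSplitting IsQuasinilpotent a e :=
  exists_isDrazinSplitting_iff.symm

lemma isAgDrazinInv_iff {A : Type*} [NormedRing A] [NormedAlgebra ℂ A] {a : A} :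
    IsAgDrazinInv a ↔ ∃ e, IsDrazinSplitting MemAcc a e :=
  exists_isDrazinSplitting_iff.symm

section SpectralIdempotent

variable {R A : Type*} [CommRing R] [Ring A] [Algebra R A] {b q q₁ q₂ : A}
  {K K' S S' K₁ K₂ S₁ S₂ : Set R}

/-- An idempotent `q` of the bicommutant of `b` separating parts of the spectrum of `b`: the block
of `b` on `q` has its spectrum in `K`, the block on `1 - q` has its spectrum off `S`. For
`K = S` this is the role of the Riesz idempotent of `b` at an isolated part of the spectrum. -/
structure IsSpectralIdempotent (b : A) (K S : Set R) (q : A) : Prop where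
  isIdempotentElem : IsIdempotentElem q
  commute_of_commute : ∀ c, Commute c b → Commute c q
  cornerSpectrum_subset : cornerSpectrum R q b ⊆ K
  disjoint : Disjoint (cornerSpectrum R (1 - q) b) S

namespace IsSpectralIdempotent

lemma commute (h : IsSpectralIdempotent b K S q) : Commute q b :=
  (h.commute_of_commute b (Commute.refl b)).symm

lemma mono (h : IsSpectralIdempotent b K S q) (hK : K ⊆ K') (hS : S' ⊆ S) :
    IsSpectralIdempotent b K' S' q :=
  { h with
    cornerSpectrum_subset := h.cornerSpectrum_subset.trans hK
    disjoint := h.disjoint.mono_right hS }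

lemma sup (h₁ : IsSpectralIdempotent b K₁ S₁ q₁) (h₂ : IsSpectralIdempotent b K₂ S₂ q₂) :
    IsSpectralIdempotent b (K₁ ∪ K₂) (S₁ ∪ S₂) (q₁ + q₂ - q₁ * q₂) := by
  have hcomm : Commute q₁ q₂ := h₂.commute_of_commute q₁ h₁.commute
  have hcompl : 1 - (q₁ + q₂ - q₁ * q₂) = (1 - q₁) * (1 - q₂) := by noncomm_ring
  have hcompl_comm : Commute (1 - q₁) (1 - q₂) :=
    (Commute.one_left _).sub_left ((Commute.one_right _).sub_right hcomm)
  refine ⟨h₁.isIdempotentElem.add_sub_mul_of_commute hcomm h₂.isIdempotentElem, fun c hc => ?_,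
    ?_, ?_⟩
  · have hcq₁ := h₁.commute_of_commute c hc
    have hcq₂ := h₂.commute_of_commute c hc
    exact (hcq₁.add_right hcq₂).sub_right (hcq₁.mul_right hcq₂)
  · exact (cornerSpectrum_sup_subset h₁.isIdempotentElem hcomm h₁.commute).trans
      (Set.union_subset_union h₁.cornerSpectrum_subset h₂.cornerSpectrum_subset)
  · rw [hcompl, Set.disjoint_union_right]
    constructor
    · exact h₁.disjoint.mono_left (cornerSpectrum_mul_subset h₂.isIdempotentElem.one_sub
        hcompl_comm.symm ((Commute.one_left b).sub_left h₂.commute))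
    · rw [hcompl_comm.eq]
      exact h₂.disjoint.mono_left (cornerSpectrum_mul_subset h₁.isIdempotentElem.one_sub
        hcompl_comm ((Commute.one_left b).sub_left h₁.commute))

end IsSpectralIdempotent

end SpectralIdempotent

lemma cornerSpectrum_one_sub_subset_of_isDrazinSplitting {A : Type*} [NormedRing A]
    [NormedAlgebra ℂ A] {a e : A} (h : IsDrazinSplitting IsQuasinilpotent a e) :
    cornerSpectrum ℂ (1 - e) a ⊆ {0} := by
  have hidem := h.isIdempotentElem.one_sub
  have hcomm : Commute (1 - e) a := (Commute.one_left a).sub_left h.commute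
  have hcongr : a * (1 - e) = a * (1 - e) * (1 - e) := by rw [mul_assoc, hidem.eq]
  rw [cornerSpectrum_congr hcongr, ← h.remainder]
  exact cornerSpectrum_subset_spectrum hidem (hcomm.mul_right (Commute.refl _))

section GeneralizedDrazin

variable {A : Type*} [NormedRing A] [NormedAlgebra ℂ A] [CompleteSpace A] {a b c e g n u v : A}

lemma commute_of_isDrazinSplitting_isQuasinilpotent (h : IsDrazinSplitting IsQuasinilpotent a e)
    (hca : Commute c a) : Commute c e := by
  refine commute_of_disjoint_cornerSpectrum h.isIdempotentElem h.commute hca ?_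
  refine Set.disjoint_of_subset_right (cornerSpectrum_one_sub_subset_of_isDrazinSplitting h) ?_
  exact Set.disjoint_singleton_right.2 (zero_notMem_cornerSpectrum.2 h.isUnit)

lemma IsGDrazinInv.exists_isSpectralIdempotent_singleton {l : ℂ}
    (h : IsGDrazinInv (b - l • (1 : A))) : ∃ p, IsSpectralIdempotent b {l} {l} p := by
  rw [← Algebra.algebraMap_eq_smul_one] at h
  obtain ⟨e, he⟩ := isGDrazinInv_iff.1 h
  refine ⟨1 - e, he.isIdempotentElem.one_sub, fun c hcb => ?_, fun z hz => ?_, ?_⟩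
  · exact (Commute.one_right c).sub_right (commute_of_isDrazinSplitting_isQuasinilpotent he
      (hcb.sub_right (Algebra.commute_algebraMap_right l c)))
  · have hzl : z - l ∈ cornerSpectrum ℂ (1 - e) (b - algebraMap ℂ A l) := by
      rwa [cornerSpectrum_sub_algebraMap, Set.mem_preimage, sub_add_cancel]
    exact sub_eq_zero.1 (cornerSpectrum_one_sub_subset_of_isDrazinSplitting he hzl)
  · have h0 := (zero_notMem_cornerSpectrum (R := ℂ)).2 he.isUnit
    rw [cornerSpectrum_sub_algebraMap, Set.mem_preimage, zero_add] at h0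
    rwa [sub_sub_cancel, Set.disjoint_singleton_right]

lemma MemAcc.exists_isSpectralIdempotent (hb : MemAcc b) {K : Set ℂ} (hK : IsCompact K)
    (h0 : 0 ∉ K) : ∃ q, IsSpectralIdempotent b K K q := by
  refine hK.induction_on (p := fun S => ∃ q, IsSpectralIdempotent b K S q) ?_ ?_ ?_ fun l hl => ?_
  · exact ⟨0, .zero, fun c _ => Commute.zero_right c,
      (cornerSpectrum_zero b).trans_subset (Set.empty_subset K), Set.disjoint_empty _⟩
  · exact fun S S' hSS' ⟨q, hq⟩ => ⟨q, hq.mono subset_rfl hSS'⟩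
  · exact fun S₁ S₂ ⟨q₁, hq₁⟩ ⟨q₂, hq₂⟩ => ⟨_, Set.union_self K ▸ hq₁.sup hq₂⟩
  · obtain ⟨p, hp⟩ := (hb l (ne_of_mem_of_not_mem hl h0)).exists_isSpectralIdempotent_singleton
    refine ⟨(cornerSpectrum ℂ (1 - p) b)ᶜ, mem_nhdsWithin_of_mem_nhds ?_, p, ?_⟩
    · exact (isClosed_cornerSpectrum _ b).isOpen_compl.mem_nhds
        (Set.disjoint_singleton_right.1 hp.disjoint)
    · exact { hp.mono (Set.singleton_subset_iff.2 hl) subset_rfl with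
        disjoint := disjoint_compl_right }

variable [Nontrivial A]

lemma isQuasinilpotent_iff_spectrum_subset : IsQuasinilpotent a ↔ spectrum ℂ a ⊆ {0} :=
  (spectrum.nonempty a).subset_singleton_iff.symm

lemma IsQuasinilpotent.peirceDiag (hg : IsIdempotentElem g) (hgu : Commute g u)
    (hgv : Commute g v) (hu : IsQuasinilpotent u) (hv : IsQuasinilpotent v) :
    IsQuasinilpotent (peirceDiag g u v) := by
  refine isQuasinilpotent_iff_spectrum_subset.2
    ((spectrum_peirceDiag_subset hg hgu hgv).trans (Set.union_subset ?_ ?_))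
  · exact (cornerSpectrum_subset_spectrum hg hgu).trans hu.subset
  · exact (cornerSpectrum_subset_spectrum hg.one_sub ((Commute.one_left v).sub_left hgv)).trans
      hv.subset

lemma IsQuasinilpotent.add_isNilpotent (han : Commute a n) (hn : IsNilpotent n)
    (ha : IsQuasinilpotent a) : IsQuasinilpotent (a + n) :=
  isQuasinilpotent_iff_spectrum_subset.2
    ((spectrum_add_subset_of_isNilpotent han hn).trans ha.subset)

lemma isQuasinilpotent_of_isNilpotent (hn : IsNilpotent n) : IsQuasinilpotent n :=
  zero_add n ▸ IsQuasinilpotent.add_isNilpotent (Commute.zero_left n) hn spectrum.zero_eq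

lemma IsGDrazinInv.peirceDiag (hg : IsIdempotentElem g) (hgu : Commute g u) (hgv : Commute g v)
    (hu : IsGDrazinInv u) (hv : IsGDrazinInv v) : IsGDrazinInv (peirceDiag g u v) := by
  obtain ⟨e₁, he₁⟩ := isGDrazinInv_iff.1 hu
  obtain ⟨e₂, he₂⟩ := isGDrazinInv_iff.1 hv
  exact isGDrazinInv_iff.2 ⟨_, IsDrazinSplitting.peirceDiag_peirceDiag
    (fun _ _ => IsQuasinilpotent.peirceDiag hg) hg hgu hgv
    (commute_of_isDrazinSplitting_isQuasinilpotent he₁ hgu)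
    (commute_of_isDrazinSplitting_isQuasinilpotent he₂ hgv) he₁ he₂⟩

lemma IsGDrazinInv.add_isNilpotent (han : Commute a n) (hn : IsNilpotent n)
    (ha : IsGDrazinInv a) : IsGDrazinInv (a + n) := by
  obtain ⟨e, he⟩ := isGDrazinInv_iff.1 ha
  exact isGDrazinInv_iff.2 ⟨e, he.add_isNilpotent (fun _ _ => IsQuasinilpotent.add_isNilpotent) hn
    han.symm (commute_of_isDrazinSplitting_isQuasinilpotent he han.symm)⟩

lemma isGDrazinInv_of_isAlgebraic (ha : IsAlgebraic ℂ a) : IsGDrazinInv a := by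
  obtain ⟨e, he, -⟩ := exists_isDrazinSplitting_isNilpotent ha
  exact isGDrazinInv_iff.2 ⟨e, he.mono fun _ => isQuasinilpotent_of_isNilpotent⟩

lemma MemAcc.peirceDiag (hg : IsIdempotentElem g) (hgu : Commute g u) (hgv : Commute g v)
    (hu : MemAcc u) (hv : MemAcc v) : MemAcc (peirceDiag g u v) := by
  intro l hl
  have hgl : Commute g (l • (1 : A)) := (Commute.one_right g).smul_right l
  rw [← peirceDiag_self g (l • (1 : A)), peirceDiag_sub]
  exact (hu l hl).peirceDiag hg (hgu.sub_right hgl) (hgv.sub_right hgl) (hv l hl)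

lemma MemAcc.add_isNilpotent (han : Commute a n) (hn : IsNilpotent n) (ha : MemAcc a) :
    MemAcc (a + n) := by
  intro l hl
  rw [add_sub_right_comm]
  exact (ha l hl).add_isNilpotent (han.sub_left ((Commute.one_left n).smul_left l)) hn

lemma memAcc_of_isAlgebraic (ha : IsAlgebraic ℂ a) : MemAcc a := fun l _ =>
  isGDrazinInv_of_isAlgebraic
    (Algebra.algebraMap_eq_smul_one (A := A) l ▸ isAlgebraic_sub_algebraMap ha l)

end GeneralizedDrazin

section AgDrazin

variable {A : Type*} [NormedRing A] [NormedAlgebra ℂ A]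

lemma MemAcc.isAgDrazinInv {a : A} (ha : MemAcc a) : IsAgDrazinInv a :=
  ⟨0, by simp, by simp, by simpa using ha⟩

variable [CompleteSpace A] {a e g n q t u v : A}

lemma IsSpectralIdempotent.sup_of_mul_one_sub (he : IsIdempotentElem e) (het : Commute e t)
    (hq : IsSpectralIdempotent (t * (1 - e)) (cornerSpectrum ℂ e t) (cornerSpectrum ℂ e t) q) :
    IsSpectralIdempotent t (cornerSpectrum ℂ e t) (cornerSpectrum ℂ e t) (e + q - e * q) := by
  have het' : Commute (1 - e) t := (Commute.one_left t).sub_left het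
  have hee' : Commute e (1 - e) := (Commute.one_right e).sub_right (Commute.refl e)
  have heq : Commute e q := hq.commute_of_commute e (het.mul_right hee')
  have he'q : Commute (1 - e) q := (Commute.one_left q).sub_left heq
  have htq : Commute t q :=
    hq.commute_of_commute t ((Commute.refl t).mul_right het'.symm)
  have hidem : IsIdempotentElem (e + q - e * q) :=
    he.add_sub_mul_of_commute heq hq.isIdempotentElem
  have hsub : cornerSpectrum ℂ (e + q - e * q) t ⊆ cornerSpectrum ℂ e t := by
    have hsup : e + q - e * q = e + (1 - e) * q - e * ((1 - e) * q) := by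
      rw [← mul_assoc, he.mul_one_sub_self, zero_mul, sub_zero, one_sub_mul, add_sub_assoc]
    rw [hsup]
    exact (cornerSpectrum_sup_subset he (hee'.mul_right heq) het).trans (Set.union_subset
      subset_rfl ((cornerSpectrum_mul_subset_cornerSpectrum_mul he.one_sub he'q het').trans
        hq.cornerSpectrum_subset))
  have hdisj : Disjoint (cornerSpectrum ℂ (1 - (e + q - e * q)) t) (cornerSpectrum ℂ e t) := by
    have hcompl : 1 - (e + q - e * q) = (1 - e) * (1 - q) := by noncomm_ring
    rw [hcompl]
    exact hq.disjoint.mono_left (cornerSpectrum_mul_subset_cornerSpectrum_mul he.one_sub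
      ((Commute.one_right _).sub_right he'q) het')
  have hcomm : Commute (e + q - e * q) t :=
    (het.add_left htq.symm).sub_left (het.mul_left htq.symm)
  exact ⟨hidem, fun c hct => commute_of_disjoint_cornerSpectrum hidem hcomm hct
    (hdisj.symm.mono_left hsub), hsub, hdisj⟩

variable [Nontrivial A]

/-- The idempotent `t * x` of an ag-Drazin inverse `x` of `t` need not lie in the bicommutant of
`t`, since `t` may have common spectrum on its two blocks. This common part is compact and misses
`0`, so it can be moved into the invertible block. -/
lemma IsAgDrazinInv.exists_isDrazinSplitting_forall_commute (ht : IsAgDrazinInv t) :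
    ∃ e, IsDrazinSplitting MemAcc t e ∧ ∀ c, Commute c t → Commute c e := by
  obtain ⟨e, he⟩ := isAgDrazinInv_iff.1 ht
  have h0 : 0 ∉ cornerSpectrum ℂ e t := zero_notMem_cornerSpectrum.2 he.isUnit
  obtain ⟨q, hq⟩ := he.remainder.exists_isSpectralIdempotent
    (isCompact_cornerSpectrum he.isIdempotentElem he.commute) h0
  have hsup := hq.sup_of_mul_one_sub he.isIdempotentElem he.commute
  refine ⟨e + q - e * q, ⟨hsup.isIdempotentElem, hsup.commute, ?_, ?_⟩, hsup.commute_of_commute⟩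
  · exact zero_notMem_cornerSpectrum.1 fun h => h0 (hsup.cornerSpectrum_subset h)
  · have hrem : t * (1 - (e + q - e * q)) = peirceDiag q 0 (t * (1 - e)) := by
      simp only [peirceDiag]; noncomm_ring
    rw [hrem]
    exact (memAcc_of_isAlgebraic isAlgebraic_zero).peirceDiag hq.isIdempotentElem
      (Commute.zero_right q) hq.commute he.remainder

lemma IsAgDrazinInv.peirceDiag (hg : IsIdempotentElem g) (hgu : Commute g u) (hgv : Commute g v)
    (hu : IsAgDrazinInv u) (hv : IsAgDrazinInv v) : IsAgDrazinInv (peirceDiag g u v) := by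
  obtain ⟨e₁, he₁, hcomm₁⟩ := hu.exists_isDrazinSplitting_forall_commute
  obtain ⟨e₂, he₂, hcomm₂⟩ := hv.exists_isDrazinSplitting_forall_commute
  exact isAgDrazinInv_iff.2 ⟨_, IsDrazinSplitting.peirceDiag_peirceDiag
    (fun _ _ => MemAcc.peirceDiag hg) hg hgu hgv (hcomm₁ g hgu) (hcomm₂ g hgv) he₁ he₂⟩

lemma IsAgDrazinInv.add_isNilpotent (han : Commute a n) (hn : IsNilpotent n)
    (ha : IsAgDrazinInv a) : IsAgDrazinInv (a + n) := by
  obtain ⟨e, he, hcomm⟩ := ha.exists_isDrazinSplitting_forall_commute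
  exact isAgDrazinInv_iff.2 ⟨e, he.add_isNilpotent (fun _ _ => MemAcc.add_isNilpotent) hn
    han.symm (hcomm n han.symm)⟩

end AgDrazin

theorem agDrazin_add_finiteRank_general {A : Type*} [NormedRing A] [NormedAlgebra ℂ A]
    [CompleteSpace A] {a f : A} (ha : IsAgDrazinInv a) (hf : ∀ g, IsAlgebraic ℂ (g * f))
    (haf : Commute a f) : IsAgDrazinInv (a + f) := by
  cases subsingleton_or_nontrivial A
  · rwa [Subsingleton.elim (a + f) a]
  obtain ⟨e, he, hcomm⟩ := exists_isDrazinSplitting_isNilpotent (one_mul f ▸ hf 1)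
  obtain ⟨x, -, hxf, -⟩ := he.exists_mul_eq
  have hae : Commute a e := hcomm a haf
  have he' : Commute e (1 - e) := (Commute.one_right e).sub_right (Commute.refl e)
  have hblocks : a + f = peirceDiag e ((a + f) * e) (a + f * (1 - e)) := by
    rw [peirceDiag, mul_assoc, he.isIdempotentElem.eq, add_mul a (f * (1 - e)), mul_assoc f,
      he.isIdempotentElem.one_sub.eq]
    noncomm_ring
  have hrange : IsAgDrazinInv ((a + f) * e) := by
    rw [← hxf, ← mul_assoc]
    exact (memAcc_of_isAlgebraic (hf _)).isAgDrazinInv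
  have hnil : IsAgDrazinInv (a + f * (1 - e)) :=
    ha.add_isNilpotent (haf.mul_right ((Commute.one_right a).sub_right hae)) he.remainder
  rw [hblocks]
  exact hrange.peirceDiag he.isIdempotentElem
    ((hae.symm.add_right he.commute).mul_right (Commute.refl e))
    (hae.symm.add_right (he.commute.mul_right he')) hnil

theorem agDrazin_add_finiteRank {X : Type*} [NormedAddCommGroup X] [NormedSpace ℂ X]
    [CompleteSpace X] (T F : X →L[ℂ] X)
    (hT : IsAgDrazinInv T)
    (hF : FiniteDimensional ℂ (LinearMap.range (F : X →ₗ[ℂ] X)))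
    (hcomm : T * F = F * T) :
    IsAgDrazinInv (T + F) := by
  refine agDrazin_add_finiteRank_general hT (fun G => ?_) hcomm
  have hrange : FiniteDimensional ℂ (LinearMap.range ((G * F : X →L[ℂ] X) : X →ₗ[ℂ] X)) := by
    rw [ContinuousLinearMap.toLinearMap_mul, Module.End.mul_eq_comp, LinearMap.range_comp]
    infer_instance
  exact isAlgebraic_of_finiteDimensional_range (G * F)
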